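/- (Nehari–Schwarz inequality) Let f be a nonconstant holomorphic function from the open unit disk 𝔻 into the closed unit disk, and let B be a finite Blaschke product such that every zero of B' in 𝔻 is a zero of f' of at least the same order. Then |f'(z)| (1 − |B(z)|²) ≤ |B'(z)| (1 − |f(z)|²) for all z ∈ 𝔻. -/

import Mathlib

open Metric Filter

/-- The order of vanishing of `f` at `z`. -/
noncomputable def vOrder (f : ℂ → ℂ) (z : ℂ) : ℕ∞ :=
  sInf ((fun n : ℕ => (n : ℕ∞)) '' {n : ℕ | iteratedDeriv n f z ≠ 0})

/-!
Where `f' = h * B'`, the ratio of the pullbacks of the Poincaré metric under `f` and `B` is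
`u = |h| (1 - |B|²) / (1 - |f|²)`, which is continuous even at the critical points of `B`; the
claim is `u ≤ 1`. Writing `B` as a product of Blaschke factors `φ j` and a unimodular constant, one
has `1 - |B|² ≤ ∑ (1 - |φ j|²) = (1 - |z|²) ∑ |(φ j)'|` in the disk and `|B'| = ∑ |(φ j)'|` on the
unit circle, so near the circle `1 - |B|²` is at most `c |B'| (1 - |z|²)` for any given `c > 1`, and
Schwarz-Pick for `f` yields `u ≤ c` there. If `u` exceeded `1` somewhere it would therefore have an
interior maximum `z₀` with `u z₀ > 1`. Möbius maps preserve `u`, so one may assume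
`f z₀ = B z₀ = 0`; then `f / B → h z₀` with `|h z₀| > 1`, hence `|B| < |f|` and
`|h| < u ≤ u z₀ = |h z₀|` on a punctured neighbourhood of `z₀`, contradicting the maximum principle
for `h`.
-/

open Set Topology ComplexConjugate

lemma vOrder_eq_analyticOrderAt {f : ℂ → ℂ} {z : ℂ} (hf : AnalyticAt ℂ f z) :
    vOrder f z = analyticOrderAt f z := by
  refine ENat.eq_of_forall_natCast_le_iff fun m => ?_
  have hle : (m : ℕ∞) ≤ vOrder f z ↔ ∀ i, iteratedDeriv i f z ≠ 0 → m ≤ i := by simp [vOrder]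
  rw [hle, natCast_le_analyticOrderAt_iff_iteratedDeriv_eq_zero hf]
  exact forall_congr' fun i => by rw [← not_lt, not_imp_not]

section AnalyticQuotient

variable {𝕜 : Type*} [NontriviallyNormedField 𝕜]

lemma exists_analyticOnNhd_eqOn_mul {p q : 𝕜 → 𝕜} {U : Set 𝕜} (hp : AnalyticOnNhd 𝕜 p U)
    (hq : AnalyticOnNhd 𝕜 q U) (hq_top : ∀ z ∈ U, analyticOrderAt q z ≠ ⊤)
    (hqp : ∀ z ∈ U, analyticOrderAt q z ≤ analyticOrderAt p z) :
    ∃ h, AnalyticOnNhd 𝕜 h U ∧ EqOn p (h * q) U := by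
  have hpq : MeromorphicOn (p / q) U := hp.meromorphicOn.div hq.meromorphicOn
  set h := toMeromorphicNFOn (p / q) U
  have hh : AnalyticOnNhd 𝕜 h U := by
    intro z hz
    rw [← (meromorphicNFOn_toMeromorphicNFOn _ _ hz).meromorphicOrderAt_nonneg_iff_analyticAt,
      meromorphicOrderAt_toMeromorphicNFOn hpq hz,
      meromorphicOrderAt_div (hp z hz).meromorphicAt (hq z hz).meromorphicAt,
      (hp z hz).meromorphicOrderAt_eq, (hq z hz).meromorphicOrderAt_eq]
    have hle := hqp z hz
    lift analyticOrderAt q z to ℕ using hq_top z hz with n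
    generalize analyticOrderAt p z = k at hle ⊢
    cases k with
    | top => simp
    | coe m =>
      simp only [ENat.map_natCast]
      norm_cast at hle ⊢
      lia
  refine ⟨h, hh, fun z hz => ?_⟩
  have h_eq : p =ᶠ[𝓝[≠] z] h * q := by
    have hq_ne : ∀ᶠ w in 𝓝[≠] z, q w ≠ 0 :=
      (hq z hz).eventually_eq_zero_or_eventually_ne_zero.resolve_left
        fun h0 => hq_top z hz (analyticOrderAt_eq_top.2 h0)
    filter_upwards [hpq.toMeromorphicNFOn_eq_self_on_nhdsNE hz, hq_ne] with w
      (hw : h w = p w / q w) hqw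
    rw [Pi.mul_apply, hw, div_mul_cancel₀ _ hqw]
  exact (((hp z hz).continuousAt.eventuallyEq_nhds_iff_eventuallyEq_nhdsNE
    ((hh z hz).mul (hq z hz)).continuousAt).1 h_eq).eq_of_nhds

variable [CompleteSpace 𝕜] [CharZero 𝕜] {f g h : 𝕜 → 𝕜} {z₀ : 𝕜}

lemma analyticOrderAt_deriv_add_one_of_eq_zero (hf : AnalyticAt 𝕜 f z₀) (hf₀ : f z₀ = 0) :
    analyticOrderAt (deriv f) z₀ + 1 = analyticOrderAt f z₀ := by
  simpa only [hf₀, sub_zero] using hf.analyticOrderAt_deriv_add_one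

lemma analyticOrderAt_eq_of_deriv_eq_mul (hf : AnalyticAt 𝕜 f z₀) (hg : AnalyticAt 𝕜 g z₀)
    (hh : AnalyticAt 𝕜 h z₀) (hfg : deriv f =ᶠ[𝓝 z₀] h * deriv g) (hf₀ : f z₀ = 0)
    (hg₀ : g z₀ = 0) : analyticOrderAt f z₀ = analyticOrderAt (h * g) z₀ := by
  rw [← analyticOrderAt_deriv_add_one_of_eq_zero hf hf₀, analyticOrderAt_congr hfg,
    analyticOrderAt_mul hh hg.deriv, add_assoc, analyticOrderAt_deriv_add_one_of_eq_zero hg hg₀,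
    analyticOrderAt_mul hh hg]

lemma tendsto_div_nhdsNE_of_deriv_eq_mul (hf : AnalyticAt 𝕜 f z₀) (hg : AnalyticAt 𝕜 g z₀)
    (hh : AnalyticAt 𝕜 h z₀) (hfg : deriv f =ᶠ[𝓝 z₀] h * deriv g) (hf₀ : f z₀ = 0)
    (hg₀ : g z₀ = 0) (hg_top : analyticOrderAt (deriv g) z₀ ≠ ⊤) :
    Tendsto (f / g) (𝓝[≠] z₀) (𝓝 (h z₀)) := by
  -- `f / g - h z₀` has the same order at `z₀` as `h - h z₀`, so it tends to zero.
  let r : 𝕜 → 𝕜 := fun z => f z - h z₀ * g z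
  let k : 𝕜 → 𝕜 := fun z => h z - h z₀
  have hr : AnalyticAt 𝕜 r z₀ := hf.sub (analyticAt_const.mul hg)
  have hk : AnalyticAt 𝕜 k z₀ := hh.sub analyticAt_const
  have deriv_r : deriv r =ᶠ[𝓝 z₀] k * deriv g := by
    filter_upwards [hfg, hf.eventually_analyticAt, hg.eventually_analyticAt] with z hz hfz hgz
    have : deriv r z = deriv f z - h z₀ * deriv g z :=
      (hfz.differentiableAt.hasDerivAt.sub
        (hgz.differentiableAt.hasDerivAt.const_mul (h z₀))).deriv
    rw [this, hz, Pi.mul_apply, Pi.mul_apply, sub_mul]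
  have order_r : analyticOrderAt r z₀ = analyticOrderAt (k * g) z₀ :=
    analyticOrderAt_eq_of_deriv_eq_mul hr hg hk deriv_r (by simp [r, hf₀, hg₀]) hg₀
  have g_top : meromorphicOrderAt g z₀ ≠ ⊤ := by
    rw [hg.meromorphicOrderAt_eq, ← analyticOrderAt_deriv_add_one_of_eq_zero hg hg₀]
    lift analyticOrderAt (deriv g) z₀ to ℕ using hg_top with n
    exact WithTop.coe_ne_top
  have order_div : meromorphicOrderAt (r / g) z₀ = meromorphicOrderAt k z₀ := by
    rw [meromorphicOrderAt_div hr.meromorphicAt hg.meromorphicAt, hr.meromorphicOrderAt_eq,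
      order_r, ← (hk.mul hg).meromorphicOrderAt_eq,
      meromorphicOrderAt_mul hk.meromorphicAt hg.meromorphicAt, sub_eq_add_neg,
      LinearOrderedAddCommGroupWithTop.add_neg_cancel_right_of_ne_top g_top]
  have k_zero : Tendsto k (𝓝[≠] z₀) (𝓝 0) := by
    have := hk.continuousAt.continuousWithinAt (s := {z₀}ᶜ)
    simpa [ContinuousWithinAt, k] using this
  have r_div_zero : Tendsto (r / g) (𝓝[≠] z₀) (𝓝 0) := by
    rwa [tendsto_zero_iff_meromorphicOrderAt_pos (hr.meromorphicAt.div hg.meromorphicAt),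
      order_div, ← tendsto_zero_iff_meromorphicOrderAt_pos hk.meromorphicAt]
  have hg_ne : ∀ᶠ z in 𝓝[≠] z₀, g z ≠ 0 :=
    (meromorphicOrderAt_ne_top_iff_eventually_ne_zero hg.meromorphicAt).1 g_top
  have := r_div_zero.add_const (h z₀)
  rw [zero_add] at this
  refine this.congr' ?_
  filter_upwards [hg_ne] with z hz
  simp only [r, Pi.div_apply]
  field_simp
  ring

end AnalyticQuotient

lemma one_sub_sq_norm_pos {E : Type*} [SeminormedAddGroup E] {x : E} (hx : ‖x‖ < 1) :
    0 < 1 - ‖x‖ ^ 2 :=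
  sub_pos.2 (pow_lt_one₀ (norm_nonneg x) hx two_ne_zero)

section DiskInvolution

/-- The holomorphic involution of the unit disk that swaps `0` and `w`; it is also the elementary
Blaschke factor with zero `w`. -/
noncomputable def diskInvolution (w u : ℂ) : ℂ := (w - u) / (1 - conj w * u)

variable {w u : ℂ}

lemma diskInvolution_self (w : ℂ) : diskInvolution w w = 0 := by simp [diskInvolution]

lemma diskInvolution_zero (w : ℂ) : diskInvolution w 0 = w := by simp [diskInvolution]

lemma one_sub_conj_mul_ne_zero (hw : ‖w‖ < 1) (hu : ‖u‖ ≤ 1) : 1 - conj w * u ≠ 0 := by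
  have : ‖conj w * u‖ < 1 := by
    rw [norm_mul, RCLike.norm_conj]
    exact mul_lt_one_of_nonneg_of_lt_one_left (norm_nonneg w) hw hu
  exact sub_ne_zero.2 fun h => by simp [← h] at this

lemma one_sub_sq_norm_diskInvolution (hw : ‖w‖ < 1) (hu : ‖u‖ ≤ 1) :
    1 - ‖diskInvolution w u‖ ^ 2 = (1 - ‖w‖ ^ 2) * (1 - ‖u‖ ^ 2) / ‖1 - conj w * u‖ ^ 2 := by
  have h_den : ‖1 - conj w * u‖ ^ 2 ≠ 0 :=
    pow_ne_zero 2 (norm_ne_zero_iff.2 (one_sub_conj_mul_ne_zero hw hu))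
  rw [diskInvolution, norm_div, div_pow, eq_div_iff h_den, sub_mul, div_mul_cancel₀ _ h_den]
  simp only [Complex.sq_norm, Complex.normSq_apply, Complex.sub_re, Complex.sub_im, Complex.mul_re,
    Complex.mul_im, Complex.conj_re, Complex.conj_im, Complex.one_re, Complex.one_im]
  ring

lemma norm_diskInvolution_lt_one (hw : ‖w‖ < 1) (hu : ‖u‖ < 1) : ‖diskInvolution w u‖ < 1 := by
  have h_pos : 0 < 1 - ‖diskInvolution w u‖ ^ 2 := by
    rw [one_sub_sq_norm_diskInvolution hw hu.le]
    exact div_pos (mul_pos (one_sub_sq_norm_pos hw) (one_sub_sq_norm_pos hu))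
      (pow_pos (norm_pos_iff.2 (one_sub_conj_mul_ne_zero hw hu.le)) 2)
  exact lt_of_pow_lt_pow_left₀ 2 zero_le_one (by linarith)

lemma norm_diskInvolution_eq_one (hw : ‖w‖ < 1) (hu : ‖u‖ = 1) : ‖diskInvolution w u‖ = 1 := by
  have h_sq := one_sub_sq_norm_diskInvolution hw hu.le
  rw [hu, one_pow, sub_self, mul_zero, zero_div, sub_eq_zero] at h_sq
  exact (pow_eq_one_iff_of_nonneg (norm_nonneg _) two_ne_zero).1 h_sq.symm

lemma mapsTo_diskInvolution (hw : ‖w‖ < 1) :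
    MapsTo (diskInvolution w) (ball 0 1) (ball 0 1) := fun _ hu =>
  mem_ball_zero_iff.2 (norm_diskInvolution_lt_one hw (mem_ball_zero_iff.1 hu))

lemma analyticAt_diskInvolution (hw : ‖w‖ < 1) (hu : ‖u‖ ≤ 1) :
    AnalyticAt ℂ (diskInvolution w) u := by
  have := one_sub_conj_mul_ne_zero hw hu
  unfold diskInvolution
  fun_prop (disch := assumption)

lemma deriv_diskInvolution (hw : ‖w‖ < 1) (hu : ‖u‖ ≤ 1) :
    deriv (diskInvolution w) u = -(1 - conj w * w) / (1 - conj w * u) ^ 2 := by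
  have h_num : HasDerivAt (fun u => w - u) (-1) u := (hasDerivAt_id u).const_sub w
  have h_den : HasDerivAt (fun u => 1 - conj w * u) (-(conj w * 1)) u :=
    ((hasDerivAt_id u).const_mul _).const_sub 1
  have h_div := (h_num.div h_den (one_sub_conj_mul_ne_zero hw hu)).deriv
  refine h_div.trans ?_
  congr 1
  ring

lemma norm_deriv_diskInvolution (hw : ‖w‖ < 1) (hu : ‖u‖ ≤ 1) :
    ‖deriv (diskInvolution w) u‖ = (1 - ‖w‖ ^ 2) / ‖1 - conj w * u‖ ^ 2 := by
  have h_num : ‖1 - conj w * w‖ = 1 - ‖w‖ ^ 2 := by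
    rw [Complex.conj_mul', ← Complex.ofReal_pow, ← Complex.ofReal_one, ← Complex.ofReal_sub,
      Complex.norm_of_nonneg (one_sub_sq_norm_pos hw).le]
  rw [deriv_diskInvolution hw hu, norm_div, norm_neg, h_num, norm_pow]

lemma deriv_diskInvolution_ne_zero (hw : ‖w‖ < 1) (hu : ‖u‖ ≤ 1) :
    deriv (diskInvolution w) u ≠ 0 := by
  rw [← norm_pos_iff, norm_deriv_diskInvolution hw hu]
  exact div_pos (one_sub_sq_norm_pos hw)
    (pow_pos (norm_pos_iff.2 (one_sub_conj_mul_ne_zero hw hu)) 2)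

lemma norm_deriv_diskInvolution_mul (hw : ‖w‖ < 1) (hu : ‖u‖ ≤ 1) :
    ‖deriv (diskInvolution w) u‖ * (1 - ‖u‖ ^ 2) = 1 - ‖diskInvolution w u‖ ^ 2 := by
  rw [norm_deriv_diskInvolution hw hu, one_sub_sq_norm_diskInvolution hw hu, div_mul_eq_mul_div]

lemma mul_logDeriv_diskInvolution (hw : ‖w‖ < 1) (hu : ‖u‖ = 1) :
    u * logDeriv (diskInvolution w) u = ‖deriv (diskInvolution w) u‖ := by
  have h_circle : u * conj u = 1 := by simp [Complex.mul_conj', hu]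
  have h_den := one_sub_conj_mul_ne_zero hw hu.le
  have h_den' : 1 - w * conj u ≠ 0 := by simpa using (map_ne_zero (starRingEnd ℂ)).2 h_den
  have h_num : w - u = -u * (1 - w * conj u) := by linear_combination (-w) * h_circle
  have h_u : u ≠ 0 := norm_ne_zero_iff.1 (by simp [hu])
  rw [logDeriv_apply, norm_deriv_diskInvolution hw hu.le, deriv_diskInvolution hw hu.le,
    diskInvolution, h_num]
  push_cast
  rw [← Complex.conj_mul', ← Complex.conj_mul', map_sub, map_mul, map_one, Complex.conj_conj]
  field_simp

end DiskInvolution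

lemma schwarz_pick_norm_deriv {f : ℂ → ℂ} (hf : DifferentiableOn ℂ f (ball 0 1))
    (hf_maps : MapsTo f (ball 0 1) (ball 0 1)) {z : ℂ} (hz : z ∈ ball 0 1) :
    ‖deriv f z‖ * (1 - ‖z‖ ^ 2) ≤ 1 - ‖f z‖ ^ 2 := by
  have hz' : ‖z‖ < 1 := mem_ball_zero_iff.1 hz
  have hfz : ‖f z‖ < 1 := mem_ball_zero_iff.1 (hf_maps hz)
  have diff_inv {w : ℂ} (hw : ‖w‖ < 1) : DifferentiableOn ℂ (diskInvolution w) (ball 0 1) :=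
    fun u hu => (analyticAt_diskInvolution hw
      (mem_ball_zero_iff.1 hu).le).differentiableAt.differentiableWithinAt
  let g := diskInvolution (f z) ∘ f ∘ diskInvolution z
  have g_diff : DifferentiableOn ℂ g (ball 0 1) :=
    (diff_inv hfz).comp (hf.comp (diff_inv hz') (mapsTo_diskInvolution hz'))
      (hf_maps.comp (mapsTo_diskInvolution hz'))
  have g_maps : MapsTo g (ball 0 1) (ball 0 1) :=
    (mapsTo_diskInvolution hfz).comp (hf_maps.comp (mapsTo_diskInvolution hz'))
  have g_zero : g 0 = 0 := by simp [g, diskInvolution_zero, diskInvolution_self]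
  have g_deriv : deriv g 0 =
      deriv (diskInvolution (f z)) (f z) * (deriv f z * deriv (diskInvolution z) 0) := by
    have h_in : HasDerivAt (diskInvolution z) (deriv (diskInvolution z) 0) 0 :=
      (analyticAt_diskInvolution hz' (by simp)).differentiableAt.hasDerivAt
    have h_mid : HasDerivAt f (deriv f z) z :=
      (hf.differentiableAt (isOpen_ball.mem_nhds hz)).hasDerivAt
    have h_out : HasDerivAt (diskInvolution (f z)) (deriv (diskInvolution (f z)) (f z)) (f z) :=
      (analyticAt_diskInvolution hfz hfz.le).differentiableAt.hasDerivAt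
    exact (h_out.comp_of_eq 0 (h_mid.comp_of_eq 0 h_in (diskInvolution_zero z).symm)
      (by simp [diskInvolution_zero])).deriv
  have g_deriv_le : ‖deriv g 0‖ ≤ 1 :=
    Complex.norm_deriv_le_one_of_mapsTo_ball g_diff (by
      rw [g_zero]; exact g_maps.mono_right ball_subset_closedBall) one_pos
  have h_in : ‖deriv (diskInvolution z) 0‖ = 1 - ‖z‖ ^ 2 := by
    simpa [diskInvolution_zero] using norm_deriv_diskInvolution_mul (u := 0) hz' (by simp)
  have h_out : ‖deriv (diskInvolution (f z)) (f z)‖ * (1 - ‖f z‖ ^ 2) = 1 := by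
    simpa [diskInvolution_self] using norm_deriv_diskInvolution_mul hfz hfz.le
  rw [g_deriv, norm_mul, norm_mul, h_in] at g_deriv_le
  nlinarith [one_sub_sq_norm_pos hfz]

lemma norm_lt_of_norm_le_of_exists_ne {E : Type*} [NormedAddCommGroup E] [NormedSpace ℂ E]
    {f : E → ℂ} {U : Set E} (hU : IsPreconnected U) (hU_open : IsOpen U)
    (hf : DifferentiableOn ℂ f U) {C : ℝ} (hC : ∀ z ∈ U, ‖f z‖ ≤ C)
    (hf_ne : ∃ z ∈ U, ∃ w ∈ U, f z ≠ f w) {z : E} (hz : z ∈ U) : ‖f z‖ < C := by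
  refine (hC z hz).lt_of_ne fun h_eq => ?_
  have h_const : EqOn f (Function.const E (f z)) U :=
    Complex.eqOn_of_isPreconnected_of_isMaxOn_norm hU hU_open hf hz
      fun w hw => (hC w hw).trans_eq h_eq.symm
  obtain ⟨u, hu, v, hv, huv⟩ := hf_ne
  exact huv ((h_const hu).trans (h_const hv).symm)

section MetricRatio

/-- If `f' = h * B'`, then `metricRatio h f B` is the ratio of the pullbacks of the Poincaré metric
under `f` and under `B`. Writing `h` in place of `f' / B'` removes the singularities at the zeros
of `B'`. -/
noncomputable def metricRatio (h f B : ℂ → ℂ) (z : ℂ) : ℝ :=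
  ‖h z‖ * (1 - ‖B z‖ ^ 2) / (1 - ‖f z‖ ^ 2)

variable {h f B : ℂ → ℂ} {z₀ : ℂ}

lemma metricRatio_eq_norm {z : ℂ} (hf : f z = 0) (hB : B z = 0) :
    metricRatio h f B z = ‖h z‖ := by
  simp [metricRatio, hf, hB]

lemma eventually_norm_lt_norm_of_one_lt_norm (hf : AnalyticAt ℂ f z₀) (hB : AnalyticAt ℂ B z₀)
    (hh : AnalyticAt ℂ h z₀) (hfB : deriv f =ᶠ[𝓝 z₀] h * deriv B) (hf₀ : f z₀ = 0)
    (hB₀ : B z₀ = 0) (hB_top : analyticOrderAt (deriv B) z₀ ≠ ⊤) (hh_one : 1 < ‖h z₀‖) :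
    ∀ᶠ z in 𝓝[≠] z₀, ‖B z‖ < ‖f z‖ := by
  have h_tendsto := (tendsto_div_nhdsNE_of_deriv_eq_mul hf hB hh hfB hf₀ hB₀ hB_top).norm
  filter_upwards [h_tendsto.eventually_const_lt hh_one] with z hz
  rw [Pi.div_apply, norm_div] at hz
  have hBz : 0 < ‖B z‖ := (norm_nonneg _).lt_of_ne fun h0 => by simp [← h0] at hz; linarith
  exact (one_lt_div hBz).1 hz

lemma not_isLocalMax_metricRatio_of_eq_zero (hf : AnalyticAt ℂ f z₀) (hB : AnalyticAt ℂ B z₀)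
    (hh : AnalyticAt ℂ h z₀) (hfB : deriv f =ᶠ[𝓝 z₀] h * deriv B) (hf₀ : f z₀ = 0)
    (hB₀ : B z₀ = 0) (hB_top : analyticOrderAt (deriv B) z₀ ≠ ⊤) (hh_one : 1 < ‖h z₀‖) :
    ¬ IsLocalMax (metricRatio h f B) z₀ := by
  intro h_max
  have hf_lt : ∀ᶠ z in 𝓝[≠] z₀, ‖f z‖ < 1 := nhdsWithin_le_nhds <|
    hf.continuousAt.norm.eventually_lt continuousAt_const (by simp [hf₀])
  have h_lt : ∀ᶠ z in 𝓝[≠] z₀, ‖h z‖ < ‖h z₀‖ := by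
    filter_upwards [eventually_norm_lt_norm_of_one_lt_norm hf hB hh hfB hf₀ hB₀ hB_top hh_one,
      hf_lt, nhdsWithin_le_nhds h_max,
      nhdsWithin_le_nhds (hh.continuousAt.norm.eventually_const_lt hh_one)]
      with z hBf hfz (h_le : metricRatio h f B z ≤ metricRatio h f B z₀) hhz
    have h_ratio : 1 < (1 - ‖B z‖ ^ 2) / (1 - ‖f z‖ ^ 2) :=
      (one_lt_div (one_sub_sq_norm_pos hfz)).2 (by gcongr)
    calc ‖h z‖ < ‖h z‖ * ((1 - ‖B z‖ ^ 2) / (1 - ‖f z‖ ^ 2)) :=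
          lt_mul_of_one_lt_right (one_pos.trans hhz) h_ratio
      _ = metricRatio h f B z := (mul_div_assoc _ _ _).symm
      _ ≤ ‖h z₀‖ := h_le.trans_eq (metricRatio_eq_norm hf₀ hB₀)
  have h_norm_max : IsLocalMax (norm ∘ h) z₀ := by
    filter_upwards [eventually_nhdsWithin_iff.1 h_lt] with z hz
    rcases eq_or_ne z z₀ with rfl | hne
    · exact le_rfl
    · exact (hz hne).le
  have h_norm_eq : ∀ᶠ z in 𝓝[≠] z₀, ‖h z‖ = ‖h z₀‖ := nhdsWithin_le_nhds <|
    Complex.norm_eventually_eq_of_isLocalMax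
      (hh.eventually_analyticAt.mono fun _ hz => hz.differentiableAt) h_norm_max
  obtain ⟨z, hz_lt, hz_eq⟩ := (h_lt.and h_norm_eq).exists
  exact hz_lt.ne hz_eq

lemma metricRatio_diskInvolution_comp {v w z : ℂ} (hv : ‖v‖ < 1) (hw : ‖w‖ < 1)
    (hf : ‖f z‖ < 1) (hB : ‖B z‖ ≤ 1) :
    metricRatio (fun z => h z * deriv (diskInvolution v) (f z) / deriv (diskInvolution w) (B z))
      (diskInvolution v ∘ f) (diskInvolution w ∘ B) z = metricRatio h f B z := by
  have hv_ne := norm_ne_zero_iff.2 (deriv_diskInvolution_ne_zero hv hf.le)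
  have hw_ne := norm_ne_zero_iff.2 (deriv_diskInvolution_ne_zero hw hB)
  have hf_ne := (one_sub_sq_norm_pos hf).ne'
  simp only [metricRatio, Function.comp_apply, norm_div, norm_mul,
    ← norm_deriv_diskInvolution_mul hv hf.le, ← norm_deriv_diskInvolution_mul hw hB]
  field_simp

lemma deriv_diskInvolution_comp {w z : ℂ} (hw : ‖w‖ < 1) (hf : DifferentiableAt ℂ f z)
    (hfz : ‖f z‖ ≤ 1) :
    deriv (diskInvolution w ∘ f) z = deriv (diskInvolution w) (f z) * deriv f z :=
  deriv_comp z (analyticAt_diskInvolution hw hfz).differentiableAt hf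

lemma analyticOrderAt_deriv_diskInvolution_comp {w : ℂ} (hw : ‖w‖ < 1) (hf : AnalyticAt ℂ f z₀)
    (hf₀ : ‖f z₀‖ < 1) :
    analyticOrderAt (deriv (diskInvolution w ∘ f)) z₀ = analyticOrderAt (deriv f) z₀ := by
  have h_deriv : deriv (diskInvolution w ∘ f) =ᶠ[𝓝 z₀] deriv (diskInvolution w) ∘ f * deriv f := by
    filter_upwards [hf.eventually_analyticAt,
      hf.continuousAt.norm.eventually_lt continuousAt_const hf₀] with z hz hfz
    exact deriv_diskInvolution_comp hw hz.differentiableAt hfz.le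
  have h_factor : AnalyticAt ℂ (deriv (diskInvolution w) ∘ f) z₀ :=
    (analyticAt_diskInvolution hw hf₀.le).deriv.comp hf
  rw [analyticOrderAt_congr h_deriv, analyticOrderAt_mul h_factor hf.deriv,
    h_factor.analyticOrderAt_eq_zero.2 (deriv_diskInvolution_ne_zero hw hf₀.le), zero_add]

lemma not_isLocalMax_metricRatio (hf : AnalyticAt ℂ f z₀) (hB : AnalyticAt ℂ B z₀)
    (hh : AnalyticAt ℂ h z₀) (hfB : deriv f =ᶠ[𝓝 z₀] h * deriv B) (hf₀ : ‖f z₀‖ < 1)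
    (hB₀ : ‖B z₀‖ < 1) (hB_top : analyticOrderAt (deriv B) z₀ ≠ ⊤)
    (h_one : 1 < metricRatio h f B z₀) : ¬ IsLocalMax (metricRatio h f B) z₀ := by
  let f₁ := diskInvolution (f z₀) ∘ f
  let B₁ := diskInvolution (B z₀) ∘ B
  let h₁ := fun z =>
    h z * deriv (diskInvolution (f z₀)) (f z) / deriv (diskInvolution (B z₀)) (B z)
  have hf₁ : AnalyticAt ℂ f₁ z₀ := (analyticAt_diskInvolution hf₀ hf₀.le).comp hf
  have hB₁ : AnalyticAt ℂ B₁ z₀ := (analyticAt_diskInvolution hB₀ hB₀.le).comp hB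
  have hh₁ : AnalyticAt ℂ h₁ z₀ :=
    (hh.mul ((analyticAt_diskInvolution hf₀ hf₀.le).deriv.comp hf)).div
      ((analyticAt_diskInvolution hB₀ hB₀.le).deriv.comp hB)
      (deriv_diskInvolution_ne_zero hB₀ hB₀.le)
  have hf_lt := hf.continuousAt.norm.eventually_lt continuousAt_const hf₀
  have hB_lt := hB.continuousAt.norm.eventually_lt continuousAt_const hB₀
  have hfB₁ : deriv f₁ =ᶠ[𝓝 z₀] h₁ * deriv B₁ := by
    filter_upwards [hf.eventually_analyticAt, hB.eventually_analyticAt, hf_lt, hB_lt, hfB]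
      with z hfz hBz hf_ltz hB_ltz hfBz
    have hB_ne := deriv_diskInvolution_ne_zero hB₀ hB_ltz.le
    rw [Pi.mul_apply, deriv_diskInvolution_comp hf₀ hfz.differentiableAt hf_ltz.le,
      deriv_diskInvolution_comp hB₀ hBz.differentiableAt hB_ltz.le, hfBz, Pi.mul_apply]
    simp only [h₁]
    field_simp
  have h_ratio : metricRatio h₁ f₁ B₁ =ᶠ[𝓝 z₀] metricRatio h f B := by
    filter_upwards [hf_lt, hB_lt] with z hfz hBz
    exact metricRatio_diskInvolution_comp hf₀ hB₀ hfz hBz.le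
  have hf₁_zero : f₁ z₀ = 0 := diskInvolution_self _
  have hB₁_zero : B₁ z₀ = 0 := diskInvolution_self _
  have hB₁_top : analyticOrderAt (deriv B₁) z₀ ≠ ⊤ :=
    (analyticOrderAt_deriv_diskInvolution_comp hB₀ hB hB₀).trans_ne hB_top
  have h₁_one : 1 < ‖h₁ z₀‖ := by
    rwa [← metricRatio_eq_norm (h := h₁) hf₁_zero hB₁_zero, h_ratio.eq_of_nhds]
  exact fun h_max => not_isLocalMax_metricRatio_of_eq_zero hf₁ hB₁ hh₁ hfB₁ hf₁_zero hB₁_zero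
    hB₁_top h₁_one (h_max.congr h_ratio.symm)

lemma continuousOn_metricRatio {U : Set ℂ} (hh : ContinuousOn h U) (hf : ContinuousOn f U)
    (hB : ContinuousOn B U) (hf_lt : ∀ z ∈ U, ‖f z‖ < 1) :
    ContinuousOn (metricRatio h f B) U :=
  (hh.norm.mul (continuousOn_const.sub (hB.norm.pow 2))).div
    (continuousOn_const.sub (hf.norm.pow 2)) fun z hz => (one_sub_sq_norm_pos (hf_lt z hz)).ne'

end MetricRatio

section DiskBoundary

/-- The filter of points of the open unit disk approaching the unit circle, uniformly in the
argument. -/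
noncomputable def diskBoundary : Filter ℂ := comap norm (𝓝[<] 1)

lemma eventually_diskBoundary_iff {p : ℂ → Prop} :
    (∀ᶠ z in diskBoundary, p z) ↔ ∃ r < 1, ∀ z : ℂ, r < ‖z‖ → ‖z‖ < 1 → p z := by
  simp only [diskBoundary, eventually_comap, (nhdsLT_basis (1 : ℝ)).eventually_iff, mem_Ioo]
  refine exists_congr fun r => and_congr_right fun _ => ?_
  exact ⟨fun h z h₁ h₂ => h ⟨h₁, h₂⟩ z rfl, fun h x hx z hz => by subst hz; exact h z hx.1 hx.2⟩

lemma eventually_diskBoundary_mem_ball : ∀ᶠ z in diskBoundary, z ∈ ball 0 1 :=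
  eventually_diskBoundary_iff.2 ⟨0, one_pos, fun _ _ hz => mem_ball_zero_iff.2 hz⟩

instance diskBoundary_neBot : NeBot diskBoundary := by
  rw [diskBoundary, comap_neBot_iff_frequently]
  refine Eventually.frequently ?_
  filter_upwards [Ioo_mem_nhdsLT (zero_lt_one' ℝ)] with r hr
  exact ⟨r, Complex.norm_of_nonneg hr.1.le⟩

lemma eventually_diskBoundary_of_forall_sphere {p : ℂ → Prop}
    (hp : ∀ z : ℂ, ‖z‖ = 1 → ∀ᶠ w in 𝓝 z, p w) : ∀ᶠ z in diskBoundary, p z := by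
  have h_proper : IsProperMap (norm : ℂ → ℝ) :=
    isProperMap_iff_tendsto_cocompact.2
      ⟨continuous_norm, tendsto_norm_cocompact_atTop.mono_right atTop_le_cocompact⟩
  have h_le : diskBoundary ≤ 𝓝ˢ (norm ⁻¹' {1}) :=
    (comap_mono nhdsWithin_le_nhds).trans h_proper.isClosedMap.comap_nhds_le
  exact (eventually_nhdsSet_iff_forall.2 hp).filter_mono h_le

lemma exists_isLocalMax_of_eventually_diskBoundary_lt {α : Type*} [LinearOrder α]
    [TopologicalSpace α] [ClosedIciTopology α] {u : ℂ → α} (hu : ContinuousOn u (ball 0 1)) {z₁ : ℂ}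
    (hz₁ : z₁ ∈ ball 0 1) (h_lt : ∀ᶠ z in diskBoundary, u z < u z₁) :
    ∃ z₀ ∈ ball 0 1, IsLocalMax u z₀ ∧ u z₁ ≤ u z₀ := by
  obtain ⟨r₀, hr₀, h_lt⟩ := eventually_diskBoundary_iff.1 h_lt
  obtain ⟨r, hr, hr_one⟩ := exists_between (max_lt hr₀ (mem_ball_zero_iff.1 hz₁))
  obtain ⟨hr₀r, hz₁r⟩ := max_lt_iff.1 hr
  obtain ⟨z₀, hz₀, h_max⟩ := (isCompact_closedBall (0 : ℂ) r).exists_isMaxOn_mem_subset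
    (hu.mono (closedBall_subset_ball hr_one)) (s := ball 0 r)
    (mem_closedBall_zero_iff.2 hz₁r.le) fun z hz => by
      have hz_norm : ‖z‖ = r := by
        have := mem_closedBall_zero_iff.1 hz.1
        exact this.antisymm (not_lt.1 fun h => hz.2 (mem_ball_zero_iff.2 h))
      exact h_lt z (hr₀r.trans_eq hz_norm.symm) (hz_norm.trans_lt hr_one)
  exact ⟨z₀, ball_subset_ball hr_one.le hz₀,
    h_max.isLocalMax (mem_of_superset (isOpen_ball.mem_nhds hz₀) ball_subset_closedBall),
    h_max (mem_closedBall_zero_iff.2 hz₁r.le)⟩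

end DiskBoundary

section Comparison

variable {f B : ℂ → ℂ}

lemma eventually_diskBoundary_metricRatio_le {h : ℂ → ℂ} (hf : DifferentiableOn ℂ f (ball 0 1))
    (hf_maps : MapsTo f (ball 0 1) (ball 0 1)) (hfB : EqOn (deriv f) (h * deriv B) (ball 0 1))
    {c : ℝ} (hB : ∀ᶠ z in diskBoundary, 1 - ‖B z‖ ^ 2 ≤ c * ‖deriv B z‖ * (1 - ‖z‖ ^ 2))
    (hc : 0 ≤ c) : ∀ᶠ z in diskBoundary, metricRatio h f B z ≤ c := by
  filter_upwards [eventually_diskBoundary_mem_ball, hB] with z hz hBz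
  have h_norm : ‖deriv f z‖ = ‖h z‖ * ‖deriv B z‖ := by rw [hfB hz, Pi.mul_apply, norm_mul]
  rw [metricRatio, div_le_iff₀ (one_sub_sq_norm_pos (mem_ball_zero_iff.1 (hf_maps hz)))]
  calc ‖h z‖ * (1 - ‖B z‖ ^ 2) ≤ ‖h z‖ * (c * ‖deriv B z‖ * (1 - ‖z‖ ^ 2)) := by gcongr
    _ = c * (‖deriv f z‖ * (1 - ‖z‖ ^ 2)) := by rw [h_norm]; ring
    _ ≤ c * (1 - ‖f z‖ ^ 2) := by gcongr; exact schwarz_pick_norm_deriv hf hf_maps hz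

lemma analyticOrderAt_deriv_ne_top (hB : AnalyticOnNhd ℂ B (ball 0 1))
    (hB_maps : MapsTo B (ball 0 1) (ball 0 1)) {c : ℝ}
    (hB_bdry : ∀ᶠ z in diskBoundary, 1 - ‖B z‖ ^ 2 ≤ c * ‖deriv B z‖ * (1 - ‖z‖ ^ 2))
    {z : ℂ} (hz : z ∈ ball 0 1) : analyticOrderAt (deriv B) z ≠ ⊤ := by
  obtain ⟨w, hBw, hw⟩ := (hB_bdry.and eventually_diskBoundary_mem_ball).exists
  have hBw_ne : deriv B w ≠ 0 := fun h0 => by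
    rw [h0, norm_zero, mul_zero, zero_mul] at hBw
    exact hBw.not_gt (one_sub_sq_norm_pos (mem_ball_zero_iff.1 (hB_maps hw)))
  refine hB.deriv.analyticOrderAt_ne_top_of_isPreconnected (convex_ball (0 : ℂ) 1).isPreconnected
    hw hz ?_
  rw [(hB.deriv w hw).analyticOrderAt_eq_zero.2 hBw_ne]
  exact ENat.zero_ne_top

lemma norm_deriv_mul_le_of_analyticOrderAt_deriv_le (hf : DifferentiableOn ℂ f (ball 0 1))
    (hf_maps : MapsTo f (ball 0 1) (ball 0 1)) (hB : DifferentiableOn ℂ B (ball 0 1))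
    (hB_maps : MapsTo B (ball 0 1) (ball 0 1))
    (hB_bdry : ∀ c > 1, ∀ᶠ z in diskBoundary, 1 - ‖B z‖ ^ 2 ≤ c * ‖deriv B z‖ * (1 - ‖z‖ ^ 2))
    (h_order : ∀ z ∈ ball 0 1, analyticOrderAt (deriv B) z ≤ analyticOrderAt (deriv f) z)
    {z : ℂ} (hz : z ∈ ball 0 1) :
    ‖deriv f z‖ * (1 - ‖B z‖ ^ 2) ≤ ‖deriv B z‖ * (1 - ‖f z‖ ^ 2) := by
  have hf_an := hf.analyticOnNhd isOpen_ball
  have hB_an := hB.analyticOnNhd isOpen_ball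
  have hB_top : ∀ z ∈ ball 0 1, analyticOrderAt (deriv B) z ≠ ⊤ := fun _ =>
    analyticOrderAt_deriv_ne_top hB_an hB_maps (hB_bdry 2 one_lt_two)
  obtain ⟨h, hh, hfB⟩ :=
    exists_analyticOnNhd_eqOn_mul hf_an.deriv hB_an.deriv hB_top h_order
  have h_cont : ContinuousOn (metricRatio h f B) (ball 0 1) :=
    continuousOn_metricRatio hh.continuousOn hf.continuousOn hB.continuousOn
      fun z hz => mem_ball_zero_iff.1 (hf_maps hz)
  have h_le_one : metricRatio h f B z ≤ 1 := by
    by_contra! h_one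
    obtain ⟨c, hc_one, hc⟩ := exists_between h_one
    have h_bdry := eventually_diskBoundary_metricRatio_le hf hf_maps hfB (hB_bdry c hc_one)
      (zero_le_one.trans hc_one.le)
    obtain ⟨z₀, hz₀, h_max, h_ge⟩ := exists_isLocalMax_of_eventually_diskBoundary_lt h_cont hz
      (h_bdry.mono fun _ h_le => h_le.trans_lt hc)
    exact not_isLocalMax_metricRatio (hf_an z₀ hz₀) (hB_an z₀ hz₀) (hh z₀ hz₀)
      (hfB.eventuallyEq_of_mem (isOpen_ball.mem_nhds hz₀)) (mem_ball_zero_iff.1 (hf_maps hz₀))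
      (mem_ball_zero_iff.1 (hB_maps hz₀)) (hB_top z₀ hz₀) (h_one.trans_le h_ge) h_max
  rw [metricRatio, div_le_one (one_sub_sq_norm_pos (mem_ball_zero_iff.1 (hf_maps hz)))] at h_le_one
  calc ‖deriv f z‖ * (1 - ‖B z‖ ^ 2) = ‖deriv B z‖ * (‖h z‖ * (1 - ‖B z‖ ^ 2)) := by
        rw [hfB hz, Pi.mul_apply, norm_mul]; ring
    _ ≤ ‖deriv B z‖ * (1 - ‖f z‖ ^ 2) := by gcongr

end Comparison

lemma one_sub_prod_le_sum_one_sub {ι R : Type*} [CommRing R] [PartialOrder R] [IsOrderedRing R]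
    {s : Finset ι} {x : ι → R} (h₀ : ∀ i ∈ s, 0 ≤ x i) (h₁ : ∀ i ∈ s, x i ≤ 1) :
    1 - ∏ i ∈ s, x i ≤ ∑ i ∈ s, (1 - x i) := by
  induction s using Finset.cons_induction with
  | empty => simp
  | cons i s hi ih =>
    rw [Finset.forall_mem_cons] at h₀ h₁
    have h_prod : ∏ j ∈ s, x j ≤ 1 := Finset.prod_le_one h₀.2 h₁.2
    rw [Finset.prod_cons, Finset.sum_cons]
    calc 1 - x i * ∏ j ∈ s, x j = (1 - x i) * ∏ j ∈ s, x j + (1 - ∏ j ∈ s, x j) := by ring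
      _ ≤ (1 - x i) + ∑ j ∈ s, (1 - x j) :=
        add_le_add (mul_le_of_le_one_right (sub_nonneg.2 h₁.1) h_prod) (ih h₀.2 h₁.2)

section FiniteBlaschke

variable {ι : Type*} [Fintype ι] {η : ℂ} {a : ι → ℂ} {z : ℂ}

/-- The finite Blaschke product with zeros `a j`, counted with multiplicity, and leading factor
`η`, which is meant to be unimodular. -/
noncomputable def finiteBlaschke (η : ℂ) (a : ι → ℂ) (z : ℂ) : ℂ :=
  η * ∏ j, diskInvolution (a j) z

lemma analyticAt_finiteBlaschke (ha : ∀ j, ‖a j‖ < 1) (hz : ‖z‖ ≤ 1) :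
    AnalyticAt ℂ (finiteBlaschke η a) z :=
  analyticAt_const.mul
    (Finset.analyticAt_fun_prod _ fun j _ => analyticAt_diskInvolution (ha j) hz)

lemma norm_finiteBlaschke (hη : ‖η‖ = 1) (z : ℂ) :
    ‖finiteBlaschke η a z‖ = ∏ j, ‖diskInvolution (a j) z‖ := by
  rw [finiteBlaschke, norm_mul, hη, one_mul, norm_prod]

lemma norm_finiteBlaschke_lt_one [Nonempty ι] (hη : ‖η‖ = 1) (ha : ∀ j, ‖a j‖ < 1)
    (hz : ‖z‖ < 1) : ‖finiteBlaschke η a z‖ < 1 := by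
  classical
  obtain ⟨i⟩ := ‹Nonempty ι›
  rw [norm_finiteBlaschke hη, ← Finset.mul_prod_erase _ _ (Finset.mem_univ i)]
  exact mul_lt_one_of_nonneg_of_lt_one_left (norm_nonneg _) (norm_diskInvolution_lt_one (ha i) hz)
    (Finset.prod_le_one (fun _ _ => norm_nonneg _)
      fun j _ => (norm_diskInvolution_lt_one (ha j) hz).le)

lemma one_sub_sq_norm_finiteBlaschke_le (hη : ‖η‖ = 1) (ha : ∀ j, ‖a j‖ < 1) (hz : ‖z‖ < 1) :
    1 - ‖finiteBlaschke η a z‖ ^ 2 ≤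
      (∑ j, ‖deriv (diskInvolution (a j)) z‖) * (1 - ‖z‖ ^ 2) := by
  calc 1 - ‖finiteBlaschke η a z‖ ^ 2 = 1 - ∏ j, ‖diskInvolution (a j) z‖ ^ 2 := by
        rw [norm_finiteBlaschke hη, Finset.prod_pow]
    _ ≤ ∑ j, (1 - ‖diskInvolution (a j) z‖ ^ 2) :=
        one_sub_prod_le_sum_one_sub (fun j _ => sq_nonneg _)
          fun j _ => pow_le_one₀ (norm_nonneg _) (norm_diskInvolution_lt_one (ha j) hz).le
    _ = (∑ j, ‖deriv (diskInvolution (a j)) z‖) * (1 - ‖z‖ ^ 2) := by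
        rw [Finset.sum_mul]
        exact Finset.sum_congr rfl fun j _ => (norm_deriv_diskInvolution_mul (ha j) hz.le).symm

lemma mul_logDeriv_finiteBlaschke (hη : η ≠ 0) (ha : ∀ j, ‖a j‖ < 1) (hz : ‖z‖ = 1) :
    z * logDeriv (finiteBlaschke η a) z = ∑ j, (‖deriv (diskInvolution (a j)) z‖ : ℂ) := by
  have h_factor : ∀ j ∈ Finset.univ, diskInvolution (a j) z ≠ 0 := fun j _ =>
    norm_ne_zero_iff.1 (by simp [norm_diskInvolution_eq_one (ha j) hz])
  have h_diff : ∀ j ∈ Finset.univ, DifferentiableAt ℂ (diskInvolution (a j)) z := fun j _ =>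
    (analyticAt_diskInvolution (ha j) hz.le).differentiableAt
  unfold finiteBlaschke
  rw [logDeriv_const_mul z η hη, logDeriv_prod h_factor h_diff, Finset.mul_sum]
  exact Finset.sum_congr rfl fun j _ => mul_logDeriv_diskInvolution (ha j) hz

lemma norm_deriv_finiteBlaschke (hη : ‖η‖ = 1) (ha : ∀ j, ‖a j‖ < 1) (hz : ‖z‖ = 1) :
    ‖deriv (finiteBlaschke η a) z‖ = ∑ j, ‖deriv (diskInvolution (a j)) z‖ := by
  have h_norm : ‖finiteBlaschke η a z‖ = 1 := by
    rw [norm_finiteBlaschke hη]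
    exact Finset.prod_eq_one fun j _ => norm_diskInvolution_eq_one (ha j) hz
  have hη_ne : η ≠ 0 := norm_ne_zero_iff.1 (hη.trans_ne one_ne_zero)
  have h_log := congrArg norm (mul_logDeriv_finiteBlaschke hη_ne ha hz)
  rw [← Complex.ofReal_sum, Complex.norm_of_nonneg (Finset.sum_nonneg fun j _ => norm_nonneg _),
    logDeriv_apply, norm_mul, norm_div, hz, h_norm, one_mul, div_one] at h_log
  exact h_log

lemma eventually_diskBoundary_one_sub_sq_norm_finiteBlaschke_le [Nonempty ι] (hη : ‖η‖ = 1)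
    (ha : ∀ j, ‖a j‖ < 1) {c : ℝ} (hc : 1 < c) :
    ∀ᶠ z in diskBoundary, 1 - ‖finiteBlaschke η a z‖ ^ 2 ≤
      c * ‖deriv (finiteBlaschke η a) z‖ * (1 - ‖z‖ ^ 2) := by
  have h_lt : ∀ᶠ z in diskBoundary,
      ∑ j, ‖deriv (diskInvolution (a j)) z‖ < c * ‖deriv (finiteBlaschke η a) z‖ := by
    refine eventually_diskBoundary_of_forall_sphere fun z hz => ?_
    have h_sum : ContinuousAt (fun z => ∑ j, ‖deriv (diskInvolution (a j)) z‖) z :=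
      tendsto_finsetSum _ fun j _ =>
        (analyticAt_diskInvolution (ha j) hz.le).deriv.continuousAt.norm
    have h_deriv : ContinuousAt (fun z => c * ‖deriv (finiteBlaschke η a) z‖) z :=
      continuousAt_const.mul (analyticAt_finiteBlaschke ha hz.le).deriv.continuousAt.norm
    refine h_sum.eventually_lt h_deriv ?_
    rw [norm_deriv_finiteBlaschke hη ha hz]
    exact lt_mul_of_one_lt_left (Finset.sum_pos
      (fun j _ => norm_pos_iff.2 (deriv_diskInvolution_ne_zero (ha j) hz.le))
      Finset.univ_nonempty) hc
  filter_upwards [h_lt, eventually_diskBoundary_mem_ball] with z h_ltz hz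
  have hz' := mem_ball_zero_iff.1 hz
  exact (one_sub_sq_norm_finiteBlaschke_le hη ha hz').trans
    (mul_le_mul_of_nonneg_right h_ltz.le (one_sub_sq_norm_pos hz').le)

end FiniteBlaschke

/-- **The Nehari–Schwarz inequality.** Let `f` be a nonconstant holomorphic function
from the open unit disk into the closed unit disk, and let
`B(z) = η ∏_j (a j − z)/(1 − conj (a j) · z)` be a finite Blaschke product such that
every zero of `B'` in the disk is a zero of `f'` of at least the same order. Then
`|f'(z)| (1 − |B(z)|²) ≤ |B'(z)| (1 − |f(z)|²)` for all `z` in the disk. -/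
theorem nehari_schwarz_inequality (f : ℂ → ℂ)
    (hf_diff : ∀ z ∈ Metric.ball (0 : ℂ) 1, DifferentiableAt ℂ f z)
    (hf_le : ∀ z ∈ Metric.ball (0 : ℂ) 1, ‖f z‖ ≤ 1)
    (hf_nc : ∃ z ∈ Metric.ball (0 : ℂ) 1, ∃ w ∈ Metric.ball (0 : ℂ) 1, f z ≠ f w)
    (n : ℕ) (η : ℂ) (a : Fin n → ℂ) (hη : ‖η‖ = 1) (ha : ∀ j, ‖a j‖ < 1)
    (B : ℂ → ℂ)
    (hB : ∀ z, B z = η * ∏ j, (a j - z) / (1 - (starRingEnd ℂ) (a j) * z))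
    (hcrit : ∀ z ∈ Metric.ball (0 : ℂ) 1, vOrder (deriv B) z ≤ vOrder (deriv f) z) :
    ∀ z ∈ Metric.ball (0 : ℂ) 1,
      ‖deriv f z‖ * (1 - ‖B z‖ ^ 2) ≤ ‖deriv B z‖ * (1 - ‖f z‖ ^ 2) := by
  have hf : DifferentiableOn ℂ f (ball 0 1) := fun z hz => (hf_diff z hz).differentiableWithinAt
  have hf_maps : MapsTo f (ball 0 1) (ball 0 1) := fun z hz => mem_ball_zero_iff.2 <|
    norm_lt_of_norm_le_of_exists_ne (convex_ball 0 1).isPreconnected isOpen_ball hf hf_le hf_nc hz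
  obtain rfl : B = finiteBlaschke η a := funext hB
  intro z hz
  rcases isEmpty_or_nonempty (Fin n) with _ | _
  · have hfz := one_sub_sq_norm_pos (mem_ball_zero_iff.1 (hf_maps hz))
    have hBz : ‖finiteBlaschke η a z‖ = 1 := by rw [norm_finiteBlaschke hη, Fintype.prod_empty]
    rw [hBz, one_pow, sub_self, mul_zero]
    exact mul_nonneg (norm_nonneg _) hfz.le
  · have hB_an : AnalyticOnNhd ℂ (finiteBlaschke η a) (ball 0 1) := fun z hz =>
      analyticAt_finiteBlaschke ha (mem_ball_zero_iff.1 hz).le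
    have hB_maps : MapsTo (finiteBlaschke η a) (ball 0 1) (ball 0 1) := fun z hz =>
      mem_ball_zero_iff.2 (norm_finiteBlaschke_lt_one hη ha (mem_ball_zero_iff.1 hz))
    refine norm_deriv_mul_le_of_analyticOrderAt_deriv_le hf hf_maps hB_an.differentiableOn hB_maps
      (fun c hc => eventually_diskBoundary_one_sub_sq_norm_finiteBlaschke_le hη ha hc)
      (fun z hz => ?_) hz
    rw [← vOrder_eq_analyticOrderAt (hB_an z hz).deriv,
      ← vOrder_eq_analyticOrderAt (hf.analyticOnNhd isOpen_ball z hz).deriv]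
    exact hcrit z hz
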